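/- arXiv:1401.5037 — 6 statements merged into one kernel-verified Lean document; each statement's English description precedes it below -/
import Mathlib

section
/- Let m ≥ 2, let u ∈ [m] and T = [m] \ {u}. A vector (R_i)_{i∈T} ∈ ℝ^T satisfies Σ_{i∈A∩T} R_i ≥ H(X_{A∩T} | X_{A^c}) for every proper subset A ⊊ [m] with A ∩ T ≠ ∅ if and only if it satisfies both (i) Σ_{i∈B} R_i ≥ H(X_B | X_{T\B}) for every nonempty proper subset B ⊊ T, and (ii) Σ_{i∈T} R_i ≥ H(X_T | X_u). (Lemma 1: simplified description of the rate region R_T when |T| = m−1.) -/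
open MeasureTheory Finset

/-- Shannon entropy (natural log) of a random variable with values in a finite set. -/
noncomputable def shannonEntropy {Ω : Type*} [MeasurableSpace Ω] (μ : Measure Ω)
    {S : Type*} [Fintype S] (Y : Ω → S) : ℝ :=
  ∑ s : S, Real.negMulLog (μ (Y ⁻¹' {s})).toReal

/-- `HX μ X A` is the Shannon entropy of the tuple `X_A = (X_i : i ∈ A)`. -/
noncomputable def HX {m : ℕ} {Ω : Type*} [MeasurableSpace Ω] (μ : Measure Ω)
    {𝒳 : Fin m → Type*} [∀ i, Fintype (𝒳 i)] (X : ∀ i, Ω → 𝒳 i)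
    (A : Finset (Fin m)) : ℝ :=
  shannonEntropy μ (fun ω => fun i : A => X i ω)

/-- Conditional entropy `H(X_A | X_B)`. -/
noncomputable def condEnt {m : ℕ} {Ω : Type*} [MeasurableSpace Ω] (μ : Measure Ω)
    {𝒳 : Fin m → Type*} [∀ i, Fintype (𝒳 i)] (X : ∀ i, Ω → 𝒳 i)
    (A B : Finset (Fin m)) : ℝ :=
  HX μ X (A ∪ B) - HX μ X B

/-!
The constraint indexed by `A = B ∪ {u}` is the constraint (i) for `B`, and the one indexed by
`A = T` is (ii). The remaining ones have `A ⊂ T`; they bound the same sum as (i) for `B = A`, but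
condition on `T \ A` together with `u`. Conditioning reduces entropy, so they follow from (i). This
uses nothing about entropy but submodularity, which is proved from Gibbs' inequality by restricting
the measure to the fibres of the conditioning variable.
-/

/-- Submodular functions on a lattice: on subsets of a ground set ordered by inclusion this is the
diminishing-returns property of rank functions of polymatroids, of which entropy is an example. -/
def IsSubmodular {α M : Type*} [Lattice α] [Add M] [LE M] (f : α → M) : Prop :=
  ∀ a b, f (a ⊔ b) + f (a ⊓ b) ≤ f a + f b

theorem IsSubmodular.sup_sub_le_sup_sub {α M : Type*} [Lattice α] [IsModularLattice α]
    [AddCommGroup M] [PartialOrder M] [IsOrderedAddMonoid M] {f : α → M}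
    (hf : IsSubmodular f) {a b c : α} (hbc : b ≤ c) (hac : a ⊓ c ≤ b) :
    f (a ⊔ c) - f c ≤ f (a ⊔ b) - f b := by
  have h_sup : a ⊔ b ⊔ c = a ⊔ c := by rw [sup_assoc, sup_of_le_right hbc]
  have h_inf : (a ⊔ b) ⊓ c = b := by
    rw [sup_comm, sup_inf_assoc_of_le a hbc, sup_of_le_left hac]
  have h := hf (a ⊔ b) c
  rw [h_sup, h_inf] at h
  exact sub_le_sub_iff.2 h

section Gibbs

theorem sub_le_mul_log_sub_mul_log {x y : ℝ} (hx : 0 ≤ x) (hy : 0 ≤ y) (hxy : y = 0 → x = 0) :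
    x - y ≤ x * Real.log x - x * Real.log y := by
  obtain rfl | hx_ne := eq_or_ne x 0
  · simpa using hy
  have hx_pos : 0 < x := hx.lt_of_ne' hx_ne
  have hy_pos : 0 < y := hy.lt_of_ne' (mt hxy hx_ne)
  calc x - y = x * (1 - (x / y)⁻¹) := by field_simp
    _ ≤ x * Real.log (x / y) :=
        mul_le_mul_of_nonneg_left (Real.one_sub_inv_le_log_of_pos (div_pos hx_pos hy_pos)) hx
    _ = x * Real.log x - x * Real.log y := by
        rw [Real.log_div hx_ne hy_pos.ne', mul_sub]

theorem sum_mul_log_le_sum_mul_log {ι : Type*} {s : Finset ι} {p q : ι → ℝ}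
    (hp : ∀ i ∈ s, 0 ≤ p i) (hq : ∀ i ∈ s, 0 ≤ q i) (hpq : ∀ i ∈ s, q i = 0 → p i = 0)
    (hsum : ∑ i ∈ s, q i ≤ ∑ i ∈ s, p i) :
    ∑ i ∈ s, p i * Real.log (q i) ≤ ∑ i ∈ s, p i * Real.log (p i) := by
  have h := sum_le_sum fun i hi ↦ sub_le_mul_log_sub_mul_log (hp i hi) (hq i hi) (hpq i hi)
  simp only [sum_sub_distrib] at h
  linarith

variable {β γ : Type*} [Fintype β] [Fintype γ] {p : β × γ → ℝ}

theorem sum_mul_log_marginals_le (hp : ∀ x, 0 ≤ p x) :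
    ∑ x, p x * (Real.log (∑ c, p (x.1, c)) + Real.log (∑ b, p (b, x.2)) - Real.log (∑ y, p y)) ≤
      ∑ x, p x * Real.log (p x) := by
  set q : β → ℝ := fun b ↦ ∑ c, p (b, c)
  set r : γ → ℝ := fun c ↦ ∑ b, p (b, c)
  set t : ℝ := ∑ x, p x
  have hq_sum : ∑ b, q b = t := (Fintype.sum_prod_type p).symm
  have hr_sum : ∑ c, r c = t := (Fintype.sum_prod_type_right p).symm
  have h_pos {x : β × γ} (hx : p x ≠ 0) : 0 < q x.1 ∧ 0 < r x.2 ∧ 0 < t := by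
    have hpx : 0 < p x := (hp x).lt_of_ne' hx
    exact ⟨sum_pos' (fun _ _ ↦ hp _) ⟨x.2, mem_univ _, hpx⟩,
      sum_pos' (fun _ _ ↦ hp _) ⟨x.1, mem_univ _, hpx⟩,
      sum_pos' (fun _ _ ↦ hp _) ⟨x, mem_univ _, hpx⟩⟩
  have h_nonneg (x : β × γ) : 0 ≤ q x.1 * r x.2 / t :=
    div_nonneg (mul_nonneg (sum_nonneg fun _ _ ↦ hp _) (sum_nonneg fun _ _ ↦ hp _))
      (sum_nonneg fun _ _ ↦ hp _)
  have h_zero (x : β × γ) : q x.1 * r x.2 / t = 0 → p x = 0 := by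
    contrapose!
    intro hx
    obtain ⟨hqx, hrx, ht⟩ := h_pos hx
    positivity
  have h_sum : ∑ x : β × γ, q x.1 * r x.2 / t = t := by
    rw [← sum_div, Fintype.sum_prod_type, ← sum_mul_sum, hq_sum, hr_sum, mul_self_div_self]
  have h_log (x : β × γ) : p x * (Real.log (q x.1) + Real.log (r x.2) - Real.log t) =
      p x * Real.log (q x.1 * r x.2 / t) := by
    obtain hx | hx := eq_or_ne (p x) 0
    · simp only [hx, zero_mul]
    · obtain ⟨hqx, hrx, ht⟩ := h_pos hx
      rw [Real.log_div (by positivity) ht.ne', Real.log_mul hqx.ne' hrx.ne']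
  rw [sum_congr rfl fun x _ ↦ h_log x]
  exact sum_mul_log_le_sum_mul_log (fun x _ ↦ hp x) (fun x _ ↦ h_nonneg x)
    (fun x _ ↦ h_zero x) h_sum.le

theorem sum_negMulLog_add_negMulLog_sum_le (hp : ∀ x, 0 ≤ p x) :
    ∑ x, Real.negMulLog (p x) + Real.negMulLog (∑ x, p x) ≤
      ∑ b, Real.negMulLog (∑ c, p (b, c)) + ∑ c, Real.negMulLog (∑ b, p (b, c)) := by
  have h_fst (g : β → ℝ) : ∑ x, p x * g x.1 = ∑ b, (∑ c, p (b, c)) * g b := by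
    simp only [Fintype.sum_prod_type, sum_mul]
  have h_snd (g : γ → ℝ) : ∑ x, p x * g x.2 = ∑ c, (∑ b, p (b, c)) * g c := by
    simp only [Fintype.sum_prod_type_right, sum_mul]
  have h := sum_mul_log_marginals_le hp
  simp only [mul_sub, mul_add, sum_sub_distrib, sum_add_distrib, ← sum_mul] at h
  rw [h_fst fun b ↦ Real.log (∑ c, p (b, c)), h_snd fun c ↦ Real.log (∑ b, p (b, c))] at h
  simp only [Real.negMulLog, neg_mul, sum_neg_distrib]
  linarith

end Gibbs

section Entropy

variable {Ω : Type*} [MeasurableSpace Ω] (μ : Measure Ω) {S V W : Type*} [Fintype S]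
  [Fintype V] [MeasurableSpace V] [MeasurableSingletonClass V]
  [Fintype W] [MeasurableSpace W] [MeasurableSingletonClass W]

theorem shannonEntropy_comp_of_injective {S' : Type*} [Fintype S'] {f : S → S'}
    (hf : Function.Injective f) (Y : Ω → S) :
    shannonEntropy μ (f ∘ Y) = shannonEntropy μ Y := by
  refine (sum_of_injOn f hf.injOn (by simp) (fun s' _ hs' ↦ ?_) fun s _ ↦ ?_).symm
  · have h_empty : f ∘ Y ⁻¹' {s'} = ∅ :=
      Set.eq_empty_of_forall_notMem fun ω hω ↦ hs' ⟨Y ω, by simp, hω⟩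
    simp [h_empty]
  · rw [Set.preimage_comp, ← Set.image_singleton, hf.preimage_image]

theorem shannonEntropy_prodMk_eq_sum_restrict (Y : Ω → S) {Z : Ω → V} (hZ : Measurable Z) :
    shannonEntropy μ (fun ω ↦ (Y ω, Z ω)) = ∑ y, shannonEntropy (μ.restrict (Y ⁻¹' {y})) Z := by
  refine (Fintype.sum_prod_type _).trans (sum_congr rfl fun y _ ↦ sum_congr rfl fun z _ ↦ ?_)
  rw [Measure.restrict_apply (hZ (measurableSet_singleton z)), Set.inter_comm,
    ← Set.singleton_prod_singleton, Set.mk_preimage_prod]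

-- The mass term vanishes for a probability measure; it makes the inequality valid for restrictions,
-- whose mass is not normalised.
theorem shannonEntropy_prodMk_add_negMulLog_le [IsFiniteMeasure μ] {Y : Ω → V} {Z : Ω → W}
    (hY : Measurable Y) (hZ : Measurable Z) :
    shannonEntropy μ (fun ω ↦ (Y ω, Z ω)) + Real.negMulLog (μ.real Set.univ) ≤
      shannonEntropy μ Y + shannonEntropy μ Z := by
  set p : V × W → ℝ := fun x ↦ μ.real ((fun ω ↦ (Y ω, Z ω)) ⁻¹' {x})
  have h_sum (s : Finset (V × W)) : ∑ x ∈ s, p x = μ.real ((fun ω ↦ (Y ω, Z ω)) ⁻¹' s) :=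
    sum_measureReal_preimage_singleton s
      fun x _ ↦ (hY.prodMk hZ) (measurableSet_singleton x)
  have h_total : ∑ x, p x = μ.real Set.univ := by simp [h_sum]
  have h_left (y : V) : ∑ z, p (y, z) = μ.real (Y ⁻¹' {y}) := by
    have h := h_sum ({y} ×ˢ univ)
    rwa [sum_product, sum_singleton, coe_product, Set.mk_preimage_prod, coe_singleton, coe_univ,
      Set.preimage_univ, Set.inter_univ] at h
  have h_right (z : W) : ∑ y, p (y, z) = μ.real (Z ⁻¹' {z}) := by
    have h := h_sum (univ ×ˢ {z})
    rwa [sum_product_right, sum_singleton, coe_product, Set.mk_preimage_prod, coe_singleton,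
      coe_univ, Set.preimage_univ, Set.univ_inter] at h
  have h := sum_negMulLog_add_negMulLog_sum_le (p := p) fun _ ↦ measureReal_nonneg
  simp only [h_total, h_left, h_right] at h
  exact h

theorem shannonEntropy_prodMk_prodMk_add_le [IsFiniteMeasure μ] (U : Ω → S) {Y : Ω → V} {Z : Ω → W}
    (hY : Measurable Y) (hZ : Measurable Z) :
    shannonEntropy μ (fun ω ↦ (U ω, Y ω, Z ω)) + shannonEntropy μ U ≤
      shannonEntropy μ (fun ω ↦ (U ω, Y ω)) + shannonEntropy μ (fun ω ↦ (U ω, Z ω)) := by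
  have h_base : shannonEntropy μ U =
      ∑ y, Real.negMulLog ((μ.restrict (U ⁻¹' {y})).real Set.univ) := by
    simp only [measureReal_restrict_apply_univ]
    rfl
  rw [shannonEntropy_prodMk_eq_sum_restrict μ U (hY.prodMk hZ),
    shannonEntropy_prodMk_eq_sum_restrict μ U hY, shannonEntropy_prodMk_eq_sum_restrict μ U hZ,
    h_base, ← sum_add_distrib, ← sum_add_distrib]
  exact sum_le_sum fun y _ ↦ shannonEntropy_prodMk_add_negMulLog_le _ hY hZ

theorem injective_restrict₂_prodMk_restrict₂_union {ι : Type*} [DecidableEq ι] {π : ι → Type*}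
    (s t : Finset ι) :
    Function.Injective fun x : ∀ i : ↥(s ∪ t), π i ↦
      (restrict₂ (π := π) subset_union_left x, restrict₂ (π := π) subset_union_right x) := by
  intro x y hxy
  obtain ⟨hs, ht⟩ := Prod.mk.inj hxy
  ext ⟨i, hi⟩
  obtain his | hit := mem_union.1 hi
  · exact congrFun hs ⟨i, his⟩
  · exact congrFun ht ⟨i, hit⟩

theorem isSubmodular_HX [IsFiniteMeasure μ] {m : ℕ} {𝒳 : Fin m → Type*} [∀ i, Fintype (𝒳 i)]
    [∀ i, MeasurableSpace (𝒳 i)] [∀ i, MeasurableSingletonClass (𝒳 i)] {X : ∀ i, Ω → 𝒳 i}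
    (hX : ∀ i, Measurable (X i)) : IsSubmodular (HX μ X) := by
  intro A B
  let XT (C : Finset (Fin m)) (ω : Ω) (i : C) : 𝒳 i := X i ω
  have hXT (C : Finset (Fin m)) : Measurable (XT C) := measurable_pi_lambda _ fun i ↦ hX i
  have h_union : shannonEntropy μ (fun ω ↦ (XT (A ∩ B) ω, XT A ω, XT B ω)) = HX μ X (A ∪ B) :=
    shannonEntropy_comp_of_injective μ (f := fun x ↦ (restrict₂ inter_subset_union x,
        restrict₂ subset_union_left x, restrict₂ subset_union_right x))
      (.of_comp (f := Prod.snd) (injective_restrict₂_prodMk_restrict₂_union A B)) (XT (A ∪ B))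
  have h_superset {C : Finset (Fin m)} (hC : A ∩ B ⊆ C) :
      shannonEntropy μ (fun ω ↦ (XT (A ∩ B) ω, XT C ω)) = HX μ X C :=
    shannonEntropy_comp_of_injective μ (f := fun x ↦ (restrict₂ hC x, x))
      (.of_comp (f := Prod.snd) Function.injective_id) (XT C)
  have h := shannonEntropy_prodMk_prodMk_add_le μ (XT (A ∩ B)) (hXT A) (hXT B)
  rwa [h_union, h_superset inter_subset_left, h_superset inter_subset_right] at h

end Entropy

theorem stmt0_general {ι M : Type*} [Fintype ι] [DecidableEq ι] [AddCommGroup M] [PartialOrder M]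
    [IsOrderedAddMonoid M] {f : Finset ι → M} (hf : IsSubmodular f) (u : ι) (T : Finset ι)
    (hT : T = {u}ᶜ) (R : ι → M) :
    (∀ A : Finset ι, A ⊂ Finset.univ → (A ∩ T).Nonempty →
        ∑ i ∈ A ∩ T, R i ≥ f (A ∩ T ∪ Aᶜ) - f Aᶜ)
      ↔ ((∀ B : Finset ι, B ⊂ T → B.Nonempty →
            ∑ i ∈ B, R i ≥ f (B ∪ T \ B) - f (T \ B)) ∧
          ∑ i ∈ T, R i ≥ f (T ∪ {u}) - f {u}) := by
  have hTc : Tᶜ = {u} := by rw [hT, compl_compl]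
  have mem_T (i : ι) : i ∈ T ↔ i ≠ u := by simp [hT]
  constructor
  · refine fun h ↦ ⟨fun B hBT hB ↦ ?_, ?_⟩
    · have h_inter : insert u B ∩ T = B := by grind
      have h_compl : (insert u B)ᶜ = T \ B := by grind [mem_compl]
      have h_ssubset : insert u B ⊂ Finset.univ := by grind
      simpa only [h_inter, h_compl] using h (insert u B) h_ssubset (h_inter.symm ▸ hB)
    · obtain rfl | hT_nonempty := T.eq_empty_or_nonempty
      · simp
      · have h_ssubset : T ⊂ Finset.univ := by grind
        simpa only [inter_self, hTc] using h T h_ssubset (by rwa [inter_self])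
  · rintro ⟨h_proper, h_full⟩ A hA hAT
    by_cases huA : u ∈ A
    · obtain ⟨i, -, hiA⟩ := exists_of_ssubset hA
      have h_sdiff : T \ (A ∩ T) = Aᶜ := by grind [mem_compl]
      have h_ssubset : A ∩ T ⊂ T :=
        (ssubset_iff_of_subset inter_subset_right).2 ⟨i, by grind⟩
      simpa only [h_sdiff] using h_proper (A ∩ T) h_ssubset hAT
    · have h_subset : A ⊆ T := by grind
      rw [inter_eq_left.2 h_subset] at hAT ⊢
      obtain rfl | h_ssubset := h_subset.eq_or_ssubset
      · rwa [hTc]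
      · have h_mono : T \ A ⊆ Aᶜ := by grind [mem_compl]
        exact (hf.sup_sub_le_sup_sub h_mono (by simp)).trans (h_proper A h_ssubset hAT)

/-- Lemma 1: for `T = [m] \ {u}`, the defining constraints of the rate region `R_T`
are equivalent to the constraints (i) and (ii). -/
theorem stmt0 {m : ℕ} (hm : 2 ≤ m) {Ω : Type*} [MeasurableSpace Ω] (μ : Measure Ω)
    [IsProbabilityMeasure μ]
    {𝒳 : Fin m → Type*} [∀ i, Fintype (𝒳 i)] [∀ i, MeasurableSpace (𝒳 i)]
    [∀ i, MeasurableSingletonClass (𝒳 i)]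
    (X : ∀ i, Ω → 𝒳 i) (hX : ∀ i, Measurable (X i))
    (u : Fin m) (T : Finset (Fin m)) (hT : T = {u}ᶜ) (R : Fin m → ℝ) :
    (∀ A : Finset (Fin m), A ⊂ Finset.univ → (A ∩ T).Nonempty →
        ∑ i ∈ A ∩ T, R i ≥ condEnt μ X (A ∩ T) Aᶜ)
      ↔ ((∀ B : Finset (Fin m), B ⊂ T → B.Nonempty →
            ∑ i ∈ B, R i ≥ condEnt μ X B (T \ B)) ∧
          ∑ i ∈ T, R i ≥ condEnt μ X T {u}) :=
  stmt0_general (isSubmodular_HX μ hX) u T hT R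
end

section
/- Let m ≥ 3 and let T ⊂ [m] with |T| = m−1. Every vector (R_i)_{i∈T} in the rate region R_T satisfies Σ_{i∈T} R_i ≥ (1/(m−2))·Σ_{j∈T} H(X_{T\{j}} | X_j). In particular, R_T^{(min)} := min_{(R_i)∈R_T} Σ_{i∈T} R_i ≥ (1/(m−2))·Σ_{j∈T} H(X_{T\{j}} | X_j). (Lemma 2.) -/
open MeasureTheory Finset

/-!
For each `j`, the rate constraint at `A = {j}ᶜ` bounds `H(X_{T \ {j}} | X_j)` by
`∑_{i ∈ T \ {j}} R_i`. In the sum of these bounds over `j ∈ T` every rate `R_i` with `i ∈ T`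
occurs `|T| - 1` times.
-/

section RateRegion

variable {ι K : Type*} [DecidableEq ι]

lemma sum_sum_sdiff_singleton [CommRing K] (T : Finset ι) (R : ι → K) :
    ∑ j ∈ T, ∑ i ∈ T \ {j}, R i = ((#T : K) - 1) * ∑ i ∈ T, R i :=
  calc ∑ j ∈ T, ∑ i ∈ T \ {j}, R i
      = ∑ j ∈ T, (∑ i ∈ T, R i - R j) :=
        sum_congr rfl fun j hj ↦ by rw [sdiff_singleton_eq_erase, sum_erase_eq_sub hj]
    _ = ((#T : K) - 1) * ∑ i ∈ T, R i := by
        rw [sum_sub_distrib, sum_const, nsmul_eq_mul, sub_one_mul]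

variable [Fintype ι]

/-- The rate region `R_T`, with an arbitrary set function `f A B` in place of the conditional
entropy `H(X_A | X_B)`. Rate vectors are indexed by all of `ι`, but only their coordinates in `T`
are constrained. -/
def rateRegion [AddCommMonoid K] [LE K] (f : Finset ι → Finset ι → K) (T : Finset ι) :
    Set (ι → K) :=
  {R | ∀ A : Finset ι, A ⊂ univ → (A ∩ T).Nonempty → f (A ∩ T) Aᶜ ≤ ∑ i ∈ A ∩ T, R i}

lemma le_sum_sdiff_singleton_of_mem_rateRegion [AddCommMonoid K] [LE K]
    {f : Finset ι → Finset ι → K} {T : Finset ι} {R : ι → K} (hR : R ∈ rateRegion f T)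
    (hT : T.Nontrivial) (j : ι) : f (T \ {j}) {j} ≤ ∑ i ∈ T \ {j}, R i := by
  have inter_eq : {j}ᶜ ∩ T = T \ {j} := by rw [inter_comm, sdiff_eq_inter_compl]
  have proper : ({j} : Finset ι)ᶜ ⊂ univ :=
    ssubset_univ_iff.mpr ((compl_ne_univ_iff_nonempty _).mpr (singleton_nonempty j))
  have meets : ({j}ᶜ ∩ T).Nonempty := inter_eq ▸ hT.sdiff_singleton_nonempty
  simpa only [inter_eq, compl_compl] using hR {j}ᶜ proper meets

theorem stmt1_general [Field K] [LinearOrder K] [IsStrictOrderedRing K]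
    {f : Finset ι → Finset ι → K} {T : Finset ι} (hT : T.Nontrivial) {R : ι → K}
    (hR : R ∈ rateRegion f T) :
    1 / ((#T : K) - 1) * ∑ j ∈ T, f (T \ {j}) {j} ≤ ∑ i ∈ T, R i := by
  have card_sub_one_pos : (0 : K) < (#T : K) - 1 :=
    sub_pos.mpr (Nat.one_lt_cast.mpr (one_lt_card_iff_nontrivial.mpr hT))
  rw [one_div, inv_mul_le_iff₀ card_sub_one_pos, ← sum_sum_sdiff_singleton]
  exact sum_le_sum fun j _ ↦ le_sum_sdiff_singleton_of_mem_rateRegion hR hT j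

end RateRegion

/-- Lemma 2: lower bound on the total rate of any point of the rate region `R_T`,
for `T ⊂ [m]` with `|T| = m - 1`. -/
theorem stmt1 {m : ℕ} (hm : 3 ≤ m) {Ω : Type*} [MeasurableSpace Ω] (μ : Measure Ω)
    [IsProbabilityMeasure μ]
    {𝒳 : Fin m → Type*} [∀ i, Fintype (𝒳 i)] [∀ i, MeasurableSpace (𝒳 i)]
    [∀ i, MeasurableSingletonClass (𝒳 i)]
    (X : ∀ i, Ω → 𝒳 i) (hX : ∀ i, Measurable (X i))
    (T : Finset (Fin m)) (hT : T ⊂ Finset.univ) (hTcard : T.card = m - 1)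
    (R : Fin m → ℝ)
    (hR : ∀ A : Finset (Fin m), A ⊂ Finset.univ → (A ∩ T).Nonempty →
        ∑ i ∈ A ∩ T, R i ≥ condEnt μ X (A ∩ T) Aᶜ) :
    ∑ i ∈ T, R i ≥ (1 / ((m : ℝ) - 2)) * ∑ j ∈ T, condEnt μ X (T \ {j}) {j} := by
  have card_sub_one : (#T : ℝ) - 1 = m - 2 := by rw [hTcard, Nat.cast_pred (by lia)]; ring
  simpa only [card_sub_one] using
    stmt1_general (one_lt_card_iff_nontrivial.mp (by lia : 1 < #T)) hR
end

section
/- Let m ≥ 3. If the singleton partition S is the unique minimizer of Δ, i.e., Δ(S) < Δ(P) for every partition P of [m] with |P| ≥ 2 and P ≠ S, then Δ_T(S) < Δ(S) for every T ⊂ [m] with |T| = m−1. (Lemma 3.) -/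
open MeasureTheory Finset

/-- `P` is a partition of `[m]` into nonempty cells. -/
def IsPartition {m : ℕ} (P : Finset (Finset (Fin m))) : Prop :=
  (∀ A ∈ P, A.Nonempty) ∧ ∀ i : Fin m, ∃! A, A ∈ P ∧ i ∈ A

/-- The singleton partition `S = {{1},…,{m}}` of `[m]`. -/
def sPart (m : ℕ) : Finset (Finset (Fin m)) := Finset.univ.image fun i => {i}

/-- `Δ(P) = (1/(|P|−1))·[Σ_{A∈P} H(X_A) − H(X_{[m]})]`. -/
noncomputable def ΔP {m : ℕ} {Ω : Type*} [MeasurableSpace Ω] (μ : Measure Ω)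
    {𝒳 : Fin m → Type*} [∀ i, Fintype (𝒳 i)] (X : ∀ i, Ω → 𝒳 i)
    (P : Finset (Finset (Fin m))) : ℝ :=
  (1 / ((P.card : ℝ) - 1)) * (∑ A ∈ P, HX μ X A - HX μ X Finset.univ)

/-!
Merging the elements of a proper subset `T` of `s` with `|T| ≥ 2` into one cell turns the singleton
partition of `s` into a partition `P` with `|s| - |T| + 1` cells. For every set function in place of
the entropy, the numerators of `Δ(P)` and `Δ_T(S)` add up to that of `Δ(S)`, and so do the
denominators `|s| - |T|` and `|T| - 1`. Hence `Δ(S)` is a weighted average of `Δ(P)` and `Δ_T(S)`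
with positive weights, and `Δ(S) < Δ(P)` forces `Δ_T(S) < Δ(S)`.
-/

section Finpartition

variable {α G 𝕜 : Type*} [DecidableEq α]

/-- The sum of a set function `f` over the cells of a partition of `s`, minus its value on `s`.
For an entropy function and the singleton partition this is the total correlation of `X_s`. -/
def partitionDefect [AddCommGroup G] (f : Finset α → G) {s : Finset α} (P : Finpartition s) : G :=
  ∑ A ∈ P.parts, f A - f s

/-- The quantity `Δ(P)` of an arbitrary set function on a partition of an arbitrary finite set, so
that `Δ_T(S)` is its value at `(⊥ : Finpartition T)`. As `x / 0 = 0`, it vanishes if `P` has exactly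
one cell. -/
def normalizedDefect [Field 𝕜] (f : Finset α → 𝕜) {s : Finset α} (P : Finpartition s) : 𝕜 :=
  partitionDefect f P / ((#P.parts : 𝕜) - 1)

lemma partitionDefect_bot [AddCommGroup G] (f : Finset α → G) (s : Finset α) :
    partitionDefect f (⊥ : Finpartition s) = ∑ i ∈ s, f {i} - f s := by
  simp [partitionDefect]

lemma normalizedDefect_bot [Field 𝕜] (f : Finset α → 𝕜) (s : Finset α) :
    normalizedDefect f (⊥ : Finpartition s) = (∑ i ∈ s, f {i} - f s) / ((#s : 𝕜) - 1) := by
  rw [normalizedDefect, partitionDefect_bot, Finpartition.card_bot]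

lemma partitionDefect_eq_zero_of_card_eq_one [AddCommGroup G] (f : Finset α → G) {s : Finset α}
    {P : Finpartition s} (hP : #P.parts = 1) : partitionDefect f P = 0 := by
  obtain ⟨A, hA⟩ := card_eq_one.mp hP
  have hAs : A = s := by simpa [hA] using P.sup_parts
  rw [partitionDefect, hA, sum_singleton, hAs, sub_self]

lemma card_sub_one_mul_normalizedDefect [Field 𝕜] [CharZero 𝕜] (f : Finset α → 𝕜)
    {s : Finset α} (P : Finpartition s) :
    ((#P.parts : 𝕜) - 1) * normalizedDefect f P = partitionDefect f P :=
  mul_div_cancel_of_imp' fun h =>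
    partitionDefect_eq_zero_of_card_eq_one f (by exact_mod_cast sub_eq_zero.mp h)

/-- The partition of `s` whose cells are `T` and the singletons outside `T`. -/
def collapse {s T : Finset α} (hTs : T ⊆ s) (hT : T.Nonempty) : Finpartition s :=
  (⊥ : Finpartition (s \ T)).extend hT.ne_empty sdiff_disjoint (sdiff_union_of_subset hTs)

variable {s T : Finset α}

section Collapse

variable (hTs : T ⊆ s) (hT : T.Nonempty)

lemma mem_parts_collapse : T ∈ (collapse hTs hT).parts :=
  mem_insert_self _ _

lemma card_parts_collapse : #(collapse hTs hT).parts = #s - #T + 1 := by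
  rw [collapse, Finpartition.card_extend, Finpartition.card_bot, card_sdiff_of_subset hTs]

lemma collapse_ne_bot (hcard : 2 ≤ #T) : collapse hTs hT ≠ ⊥ := by
  intro hbot
  obtain ⟨a, -, rfl⟩ := Finpartition.mem_bot_iff.mp (hbot ▸ mem_parts_collapse hTs hT)
  simp at hcard

lemma partitionDefect_collapse [AddCommGroup G] (f : Finset α → G) :
    partitionDefect f (collapse hTs hT) = f T + ∑ i ∈ s \ T, f {i} - f s := by
  have hT_notMem : T ∉ (⊥ : Finpartition (s \ T)).parts := fun hmem =>
    hT.ne_empty (disjoint_sdiff.eq_bot_of_le (Finpartition.le _ hmem))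
  simp only [partitionDefect, collapse, Finpartition.extend]
  rw [sum_insert hT_notMem, Finpartition.parts_bot, sum_map, Function.Embedding.coeFn_mk]

lemma partitionDefect_collapse_add_bot [AddCommGroup G] (f : Finset α → G) :
    partitionDefect f (collapse hTs hT) + partitionDefect f (⊥ : Finpartition T) =
      partitionDefect f (⊥ : Finpartition s) := by
  rw [partitionDefect_collapse, partitionDefect_bot, partitionDefect_bot, ← sum_sdiff hTs]
  abel

lemma normalizedDefect_collapse_add_bot [Field 𝕜] [CharZero 𝕜] (f : Finset α → 𝕜) :
    ((#s : 𝕜) - #T) * normalizedDefect f (collapse hTs hT) +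
        ((#T : 𝕜) - 1) * normalizedDefect f (⊥ : Finpartition T) =
      ((#s : 𝕜) - 1) * normalizedDefect f (⊥ : Finpartition s) := by
  have hcollapse := card_sub_one_mul_normalizedDefect f (collapse hTs hT)
  have hbotT := card_sub_one_mul_normalizedDefect f (⊥ : Finpartition T)
  have hbotS := card_sub_one_mul_normalizedDefect f (⊥ : Finpartition s)
  rw [card_parts_collapse, Nat.cast_add_one, add_sub_cancel_right,
    Nat.cast_sub (card_le_card hTs)] at hcollapse
  rw [Finpartition.card_bot] at hbotT hbotS
  rw [hcollapse, hbotT, hbotS, partitionDefect_collapse_add_bot]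

end Collapse

lemma normalizedDefect_bot_lt_of_lt_collapse [Field 𝕜] [LinearOrder 𝕜] [IsStrictOrderedRing 𝕜]
    (f : Finset α → 𝕜) (hTs : T ⊂ s) (hT : T.Nonempty) (hcard : 2 ≤ #T)
    (hlt : normalizedDefect f (⊥ : Finpartition s) <
      normalizedDefect f (collapse hTs.subset hT)) :
    normalizedDefect f (⊥ : Finpartition T) < normalizedDefect f (⊥ : Finpartition s) := by
  have hTpos : (0 : 𝕜) < #T - 1 := sub_pos.mpr (by exact_mod_cast hcard)
  have hspos : (0 : 𝕜) < #s - #T := sub_pos.mpr (by exact_mod_cast card_lt_card hTs)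
  have haverage := normalizedDefect_collapse_add_bot hTs.subset hT f
  have hweighted := mul_lt_mul_of_pos_left hlt hspos
  refine lt_of_mul_lt_mul_left ?_ hTpos.le
  linarith

theorem stmt3_general [Field 𝕜] [LinearOrder 𝕜] [IsStrictOrderedRing 𝕜] (f : Finset α → 𝕜)
    (hmin : ∀ P : Finpartition s, 2 ≤ #P.parts → P ≠ ⊥ →
      normalizedDefect f (⊥ : Finpartition s) < normalizedDefect f P)
    (hTs : T ⊂ s) (hcard : 2 ≤ #T) :
    normalizedDefect f (⊥ : Finpartition T) < normalizedDefect f (⊥ : Finpartition s) := by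
  have hT : T.Nonempty := card_pos.mp (by lia)
  have hlt : #T < #s := card_lt_card hTs
  refine normalizedDefect_bot_lt_of_lt_collapse f hTs hT hcard (hmin _ ?_ ?_)
  · rw [card_parts_collapse]
    lia
  · exact collapse_ne_bot _ _ hcard

end Finpartition

section Entropy

variable {m : ℕ}

lemma isPartition_parts (P : Finpartition (univ : Finset (Fin m))) : IsPartition P.parts :=
  ⟨fun _ => P.nonempty_of_mem_parts, fun i => P.existsUnique_mem (mem_univ i)⟩

lemma parts_bot_univ : (⊥ : Finpartition (univ : Finset (Fin m))).parts = sPart m :=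
  map_eq_image _ _

lemma parts_ne_sPart {P : Finpartition (univ : Finset (Fin m))} (hP : P ≠ ⊥) :
    P.parts ≠ sPart m :=
  fun h => hP (Finpartition.ext (h.trans parts_bot_univ.symm))

variable {Ω : Type*} [MeasurableSpace Ω] (μ : Measure Ω) {𝒳 : Fin m → Type*}
  [∀ i, Fintype (𝒳 i)] (X : ∀ i, Ω → 𝒳 i)

lemma ΔP_parts (P : Finpartition (univ : Finset (Fin m))) :
    ΔP μ X P.parts = normalizedDefect (HX μ X) P :=
  one_div_mul_eq_div _ _

lemma ΔP_sPart :
    ΔP μ X (sPart m) = normalizedDefect (HX μ X) (⊥ : Finpartition (univ : Finset (Fin m))) := by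
  rw [← parts_bot_univ, ΔP_parts]

lemma normalizedDefect_bot_lt_of_forall_ΔP
    (hmin : ∀ P : Finset (Finset (Fin m)), IsPartition P → 2 ≤ P.card → P ≠ sPart m →
      ΔP μ X (sPart m) < ΔP μ X P)
    (P : Finpartition (univ : Finset (Fin m))) (hcard : 2 ≤ #P.parts) (hP : P ≠ ⊥) :
    normalizedDefect (HX μ X) (⊥ : Finpartition (univ : Finset (Fin m))) <
      normalizedDefect (HX μ X) P := by
  rw [← ΔP_sPart, ← ΔP_parts]
  exact hmin P.parts (isPartition_parts P) hcard (parts_ne_sPart hP)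

end Entropy

/-- Lemma 3: if the singleton partition is the unique minimizer of `Δ`, then
`Δ_T(S) < Δ(S)` for every `T ⊂ [m]` with `|T| = m−1`. -/
theorem stmt3 {m : ℕ} (hm : 3 ≤ m) {Ω : Type*} [MeasurableSpace Ω] (μ : Measure Ω)
    [IsProbabilityMeasure μ]
    {𝒳 : Fin m → Type*} [∀ i, Fintype (𝒳 i)] [∀ i, MeasurableSpace (𝒳 i)]
    [∀ i, MeasurableSingletonClass (𝒳 i)]
    (X : ∀ i, Ω → 𝒳 i) (hX : ∀ i, Measurable (X i))
    (hmin : ∀ P : Finset (Finset (Fin m)), IsPartition P → 2 ≤ P.card → P ≠ sPart m →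
        ΔP μ X (sPart m) < ΔP μ X P) :
    ∀ T : Finset (Fin m), T ⊂ Finset.univ → T.card = m - 1 →
      (1 / ((m : ℝ) - 2)) * (∑ i ∈ T, HX μ X {i} - HX μ X T) < ΔP μ X (sPart m) := by
  intro T hT hcard
  have hdenom : (m : ℝ) - 2 = #T - 1 := by
    rw [hcard, Nat.cast_pred (by lia)]
    ring
  rw [hdenom, one_div_mul_eq_div, ← normalizedDefect_bot, ΔP_sPart]
  exact stmt3_general (HX μ X) (normalizedDefect_bot_lt_of_forall_ΔP μ X hmin) hT (by lia)
end

section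
/- Suppose X_1,…,X_m are isentropic, m ≥ 2. Define g(k) := H(X_{[k]} | X_{[m]\[k]}) for 1 ≤ k ≤ m−1 and g(m) := H(X_{[m]}), where [k] = {1,…,k}. Then the function k ↦ g(k)/k is non-decreasing on {1,…,m}; equivalently, k·g(k+1) − (k+1)·g(k) ≥ 0 for all 1 ≤ k ≤ m−1. (Appendix A.) -/
open MeasureTheory Finset

/-- The set `[k] = {1,…,k}`, viewed inside `Fin m` as the first `k` indices. -/
def Ik {m : ℕ} (k : ℕ) : Finset (Fin m) :=
  Finset.univ.filter fun i : Fin m => (i : ℕ) < k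

/-!
Strong subadditivity of entropy says that `A ↦ H(X_A)` is submodular. For isentropic variables it
makes the sequence `k ↦ H(X_{[m]}) - H(X_{[m]∖[k]})` convex: apply it to two sets of size
`m - k - 1` whose union is `[m]∖[k]` and whose intersection is `[m]∖[k+2]`. This sequence vanishes
at `0` and equals `g` on `{1, …, m}`, so `g k / k` is the slope of a convex sequence seen from the
origin and therefore grows with `k`.
-/

section Sequence

variable {u : ℕ → ℝ} {n : ℕ}

lemma succ_mul_le_mul_succ_of_convex (h0 : u 0 ≤ 0)
    (hu : ∀ k, k + 2 ≤ n → 2 * u (k + 1) ≤ u k + u (k + 2)) {k : ℕ} (hk : k < n) :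
    ((k : ℝ) + 1) * u k ≤ k * u (k + 1) := by
  induction k with
  | zero => simpa using h0
  | succ k ih =>
    have hconvex := mul_le_mul_of_nonneg_left (hu k hk) (by positivity : (0 : ℝ) ≤ k + 1)
    have hprev := ih (by lia)
    push_cast
    linarith

lemma monotoneOn_div_of_succ_mul_le_mul_succ
    (hu : ∀ k, 1 ≤ k → k < n → ((k : ℝ) + 1) * u k ≤ k * u (k + 1)) :
    MonotoneOn (fun k : ℕ => u k / k) (Set.Icc 1 n) := by
  refine monotoneOn_of_le_succ Set.ordConnected_Icc fun k _ hk hk' => ?_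
  have hpos : (0 : ℝ) < k := Nat.cast_pos.2 hk.1
  rw [Nat.succ_eq_succ, Nat.succ_eq_add_one, Nat.cast_add_one,
    div_le_div_iff₀ hpos (by positivity)]
  linarith [hu k hk.1 hk'.2]

end Sequence

section Gibbs

lemma sub_le_mul_log_sub_log {p q : ℝ} (hp : 0 ≤ p) (hq : 0 ≤ q) (hpq : q = 0 → p = 0) :
    p - q ≤ p * (Real.log p - Real.log q) := by
  rcases hp.eq_or_lt with rfl | hp
  · simpa using hq
  have hq : 0 < q := hq.lt_of_ne' fun h => hp.ne' (hpq h)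
  have hlog := mul_le_mul_of_nonneg_left (Real.log_le_sub_one_of_pos (div_pos hq hp)) hp.le
  rw [Real.log_div hq.ne' hp.ne', mul_sub_one, mul_div_cancel₀ _ hp.ne'] at hlog
  linarith

lemma sum_negMulLog_le_neg_sum_mul_log {ι : Type*} {s : Finset ι} {p q : ι → ℝ}
    (hp : ∀ i ∈ s, 0 ≤ p i) (hq : ∀ i ∈ s, 0 ≤ q i) (hpq : ∀ i ∈ s, q i = 0 → p i = 0)
    (hsum : ∑ i ∈ s, q i ≤ ∑ i ∈ s, p i) :
    ∑ i ∈ s, Real.negMulLog (p i) ≤ -∑ i ∈ s, p i * Real.log (q i) := by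
  have hkl := sum_le_sum fun i hi => sub_le_mul_log_sub_log (hp i hi) (hq i hi) (hpq i hi)
  simp only [mul_sub, sum_sub_distrib] at hkl
  simp only [Real.negMulLog, neg_mul, sum_neg_distrib]
  linarith

lemma mul_log_mul_div {p a b c : ℝ} (ha : a = 0 → p = 0) (hb : b = 0 → p = 0)
    (hc : c = 0 → p = 0) :
    p * Real.log (a * b / c) = p * Real.log a + p * Real.log b - p * Real.log c := by
  by_cases hp : p = 0
  · simp only [hp, zero_mul, add_zero, sub_zero]
  · rw [Real.log_div (mul_ne_zero (mt ha hp) (mt hb hp)) (mt hc hp),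
      Real.log_mul (mt ha hp) (mt hb hp)]
    ring

/- Gibbs' inequality against the array `a i * b j / c` with the same marginals as `p`. -/
lemma sum_negMulLog_add_negMulLog_sum_le_s12 {ι κ : Type*} [Fintype ι] [Fintype κ]
    {p : ι → κ → ℝ} (hp : ∀ i j, 0 ≤ p i j) :
    ∑ i, ∑ j, Real.negMulLog (p i j) + Real.negMulLog (∑ i, ∑ j, p i j) ≤
      ∑ i, Real.negMulLog (∑ j, p i j) + ∑ j, Real.negMulLog (∑ i, p i j) := by
  set a : ι → ℝ := fun i => ∑ j, p i j with ha
  set b : κ → ℝ := fun j => ∑ i, p i j with hb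
  set c : ℝ := ∑ i, a i with hc
  have hbc : ∑ j, b j = c := sum_comm
  have ha0 i : 0 ≤ a i := sum_nonneg fun j _ => hp i j
  have hb0 j : 0 ≤ b j := sum_nonneg fun i _ => hp i j
  have hc0 : 0 ≤ c := sum_nonneg fun i _ => ha0 i
  have eq_zero_of_row {i j} (h : a i = 0) : p i j = 0 :=
    (sum_eq_zero_iff_of_nonneg fun j _ => hp i j).1 h j (mem_univ j)
  have eq_zero_of_col {i j} (h : b j = 0) : p i j = 0 :=
    (sum_eq_zero_iff_of_nonneg fun i _ => hp i j).1 h i (mem_univ i)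
  have eq_zero_of_total {i j} (h : c = 0) : p i j = 0 :=
    eq_zero_of_row ((sum_eq_zero_iff_of_nonneg fun i _ => ha0 i).1 h i (mem_univ i))
  have hgibbs := sum_negMulLog_le_neg_sum_mul_log (s := univ) (p := fun x : ι × κ => p x.1 x.2)
    (q := fun x => a x.1 * b x.2 / c) (fun x _ => hp x.1 x.2)
    (fun x _ => div_nonneg (mul_nonneg (ha0 x.1) (hb0 x.2)) hc0)
    (fun x _ h => by
      rcases div_eq_zero_iff.1 h with h | h
      · exact (mul_eq_zero.1 h).elim eq_zero_of_row eq_zero_of_col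
      · exact eq_zero_of_total h)
    (by simp only [Fintype.sum_prod_type, ← sum_div, ← mul_sum, ← sum_mul, hbc, ← hc, ← ha,
          mul_self_div_self, le_refl])
  have hlog i j := mul_log_mul_div (eq_zero_of_row (i := i) (j := j)) eq_zero_of_col
    eq_zero_of_total
  have hcol : ∑ i, ∑ j, p i j * Real.log (b j) = ∑ j, b j * Real.log (b j) := by
    rw [sum_comm]
    simp only [hb, sum_mul]
  simp only [Fintype.sum_prod_type, hlog, sum_sub_distrib, sum_add_distrib, hcol, ← sum_mul,
    ← ha, ← hc] at hgibbs
  simp only [Real.negMulLog, neg_mul, sum_neg_distrib] at hgibbs ⊢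
  linarith

end Gibbs

section Entropy

variable {Ω : Type*} [MeasurableSpace Ω] {μ : Measure Ω}

lemma shannonEntropy_of_subsingleton [IsProbabilityMeasure μ] {S : Type*} [Fintype S]
    [Subsingleton S] (Y : Ω → S) : shannonEntropy μ Y = 0 := by
  refine sum_eq_zero fun s _ => ?_
  have hfibre : Y ⁻¹' {s} = Set.univ := Set.eq_univ_of_forall fun ω => Subsingleton.elim (Y ω) s
  rw [hfibre, measure_univ, ENNReal.toReal_one, Real.negMulLog_one]

lemma shannonEntropy_injective_comp {S T : Type*} [Fintype S] [Fintype T] (Y : Ω → S)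
    {f : S → T} (hf : f.Injective) :
    shannonEntropy μ (fun ω => f (Y ω)) = shannonEntropy μ Y := by
  refine (sum_of_injOn f hf.injOn (fun _ _ => mem_coe.2 (mem_univ _)) ?_ ?_).symm
  · intro t _ ht
    have hfibre : (fun ω => f (Y ω)) ⁻¹' {t} = ∅ :=
      Set.eq_empty_of_forall_notMem fun ω hω => ht ⟨Y ω, mem_coe.2 (mem_univ _), hω⟩
    rw [hfibre, measure_empty, ENNReal.toReal_zero, Real.negMulLog_zero]
  · intro s _
    have hfibre : (fun ω => f (Y ω)) ⁻¹' {f s} = Y ⁻¹' {s} := Set.ext fun ω => hf.eq_iff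
    rw [hfibre]

lemma sum_measureReal_preimage_prodMk [IsFiniteMeasure μ] {S T : Type*} [Fintype T]
    [MeasurableSpace T] [MeasurableSingletonClass T] (Y : Ω → S) {Z : Ω → T}
    (hZ : Measurable Z) (s : S) :
    ∑ t, μ.real ((fun ω => (Y ω, Z ω)) ⁻¹' {(s, t)}) = μ.real (Y ⁻¹' {s}) := by
  have hfibre t : μ.real ((fun ω => (Y ω, Z ω)) ⁻¹' {(s, t)}) =
      (μ.restrict (Y ⁻¹' {s})).real (Z ⁻¹' {t}) := by
    rw [measureReal_restrict_apply (hZ (measurableSet_singleton t)), Set.inter_comm,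
      ← Set.mk_preimage_prod, Set.singleton_prod_singleton]
  simp only [hfibre]
  rw [sum_measureReal_preimage_singleton _ fun t _ => hZ (measurableSet_singleton t), coe_univ,
    Set.preimage_univ, measureReal_restrict_apply_univ]

lemma shannonEntropy_triple_add_le [IsFiniteMeasure μ] {S T R : Type*} [Fintype S]
    [Fintype T] [MeasurableSpace T] [MeasurableSingletonClass T]
    [Fintype R] [MeasurableSpace R] [MeasurableSingletonClass R]
    (U : Ω → S) {V : Ω → T} {W : Ω → R} (hV : Measurable V) (hW : Measurable W) :
    shannonEntropy μ (fun ω => ((U ω, V ω), W ω)) + shannonEntropy μ U ≤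
      shannonEntropy μ (fun ω => (U ω, V ω)) + shannonEntropy μ (fun ω => (U ω, W ω)) := by
  simp only [shannonEntropy, ← measureReal_def, Fintype.sum_prod_type, ← sum_add_distrib]
  refine sum_le_sum fun u _ => ?_
  have hsum_W v : ∑ w, μ.real ((fun ω => ((U ω, V ω), W ω)) ⁻¹' {((u, v), w)}) =
      μ.real ((fun ω => (U ω, V ω)) ⁻¹' {(u, v)}) :=
    sum_measureReal_preimage_prodMk _ hW (u, v)
  have hsum_V w : ∑ v, μ.real ((fun ω => ((U ω, V ω), W ω)) ⁻¹' {((u, v), w)}) =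
      μ.real ((fun ω => (U ω, W ω)) ⁻¹' {(u, w)}) := by
    rw [← sum_measureReal_preimage_prodMk _ hV]
    refine sum_congr rfl fun v _ => congrArg μ.real (Set.ext fun ω => ?_)
    simp only [Set.mem_preimage, Set.mem_singleton_iff, Prod.mk.injEq, and_right_comm]
  simpa only [hsum_W, hsum_V, sum_measureReal_preimage_prodMk U hV u] using
    sum_negMulLog_add_negMulLog_sum_le_s12
      (p := fun v w => μ.real ((fun ω => ((U ω, V ω), W ω)) ⁻¹' {((u, v), w)}))
      fun _ _ => measureReal_nonneg

end Entropy

section InitialSegment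

variable {m k : ℕ}

lemma compl_Ik_zero : (Ik 0 : Finset (Fin m))ᶜ = univ := by
  simp [Ik]

lemma compl_Ik_self : (Ik m : Finset (Fin m))ᶜ = ∅ := by
  simp [Ik]

lemma insert_compl_Ik_succ (hk : k < m) :
    insert ⟨k, hk⟩ (Ik (k + 1) : Finset (Fin m))ᶜ = (Ik k)ᶜ := by
  ext i
  simp only [Ik, mem_insert, mem_compl, mem_filter_univ, Fin.ext_iff]
  lia

end InitialSegment

section Tuple

variable {m : ℕ} {Ω : Type*} [MeasurableSpace Ω] {μ : Measure Ω}
  {𝒳 : Fin m → Type*} [∀ i, Fintype (𝒳 i)] {X : ∀ i, Ω → 𝒳 i}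

/-- Isentropic random variables: the entropy of a tuple `X_A` depends only on the size of `A`, so
that submodularity in `A` becomes concavity in `A.card`. -/
def IsIsentropic (μ : Measure Ω) (X : ∀ i, Ω → 𝒳 i) : Prop :=
  ∀ A B : Finset (Fin m), A.Nonempty → B.Nonempty → A.card = B.card → HX μ X A = HX μ X B

lemma HX_empty [IsProbabilityMeasure μ] (X : ∀ i, Ω → 𝒳 i) : HX μ X ∅ = 0 :=
  shannonEntropy_of_subsingleton _

lemma condEnt_compl (X : ∀ i, Ω → 𝒳 i) (A : Finset (Fin m)) :
    condEnt μ X A Aᶜ = HX μ X univ - HX μ X Aᶜ := by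
  rw [condEnt, union_compl]

variable [∀ i, MeasurableSpace (𝒳 i)] [∀ i, MeasurableSingletonClass (𝒳 i)]

lemma HX_union_add_HX_inter_le [IsFiniteMeasure μ] (hX : ∀ i, Measurable (X i))
    (A B : Finset (Fin m)) : HX μ X (A ∪ B) + HX μ X (A ∩ B) ≤ HX μ X A + HX μ X B := by
  let Y (C : Finset (Fin m)) (ω : Ω) (i : C) : 𝒳 i := X i ω
  have hY C : Measurable (Y C) := measurable_pi_lambda _ fun i => hX i
  have h_left : shannonEntropy μ (fun ω => (Y (A ∩ B) ω, Y A ω)) = HX μ X A :=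
    shannonEntropy_injective_comp (Y A) (f := fun y => (restrict₂ inter_subset_left y, y))
      fun _ _ h => (Prod.ext_iff.1 h).2
  have h_right : shannonEntropy μ (fun ω => (Y (A ∩ B) ω, Y B ω)) = HX μ X B :=
    shannonEntropy_injective_comp (Y B) (f := fun y => (restrict₂ inter_subset_right y, y))
      fun _ _ h => (Prod.ext_iff.1 h).2
  have h_union :
      shannonEntropy μ (fun ω => ((Y (A ∩ B) ω, Y A ω), Y B ω)) = HX μ X (A ∪ B) := by
    refine shannonEntropy_injective_comp (Y (A ∪ B))
      (f := fun y => ((restrict₂ (inter_subset_left.trans subset_union_left) y,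
        restrict₂ subset_union_left y), restrict₂ subset_union_right y)) fun y z h => ?_
    simp only [Prod.mk.injEq] at h
    funext ⟨i, hi⟩
    rcases mem_union.1 hi with hA | hB
    · exact congrFun h.1.2 ⟨i, hA⟩
    · exact congrFun h.2 ⟨i, hB⟩
  rw [← h_left, ← h_right, ← h_union]
  exact shannonEntropy_triple_add_le _ (hY A) (hY B)

lemma IsIsentropic.HX_insert_insert_add_le [IsFiniteMeasure μ] (hiso : IsIsentropic μ X)
    (hX : ∀ i, Measurable (X i)) {C : Finset (Fin m)} {i j : Fin m} (hij : i ≠ j)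
    (hi : i ∉ C) (hj : j ∉ C) :
    HX μ X (insert i (insert j C)) + HX μ X C ≤ 2 * HX μ X (insert j C) := by
  have hunion : insert i C ∪ insert j C = insert i (insert j C) := by
    rw [insert_union, union_insert, union_self]
  have hinter : insert i C ∩ insert j C = C := by
    rw [insert_inter_of_notMem (by simp [hij, hi]), inter_eq_left]
    exact subset_insert j C
  have heq : HX μ X (insert i C) = HX μ X (insert j C) :=
    hiso _ _ (insert_nonempty i C) (insert_nonempty j C) (by
      rw [card_insert_of_notMem hi, card_insert_of_notMem hj])
  have hsubmod := HX_union_add_HX_inter_le (μ := μ) hX (insert i C) (insert j C)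
  rw [hunion, hinter, heq] at hsubmod
  linarith

lemma IsIsentropic.condEnt_Ik_compl_convex [IsFiniteMeasure μ] (hiso : IsIsentropic μ X)
    (hX : ∀ i, Measurable (X i)) {k : ℕ} (hk : k + 2 ≤ m) :
    2 * condEnt μ X (Ik (k + 1)) (Ik (k + 1))ᶜ ≤
      condEnt μ X (Ik k) (Ik k)ᶜ + condEnt μ X (Ik (k + 2)) (Ik (k + 2))ᶜ := by
  have hconcave := hiso.HX_insert_insert_add_le hX (C := (Ik (k + 2))ᶜ)
    (i := ⟨k, by lia⟩) (j := ⟨k + 1, hk⟩) (by simp) (by simp [Ik]) (by simp [Ik])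
  rw [insert_compl_Ik_succ, insert_compl_Ik_succ] at hconcave
  simp only [condEnt_compl]
  linarith

lemma IsIsentropic.succ_mul_condEnt_Ik_compl_le [IsFiniteMeasure μ] (hiso : IsIsentropic μ X)
    (hX : ∀ i, Measurable (X i)) {k : ℕ} (hk : k < m) :
    ((k : ℝ) + 1) * condEnt μ X (Ik k) (Ik k)ᶜ ≤
      k * condEnt μ X (Ik (k + 1)) (Ik (k + 1))ᶜ :=
  succ_mul_le_mul_succ_of_convex (u := fun k => condEnt μ X (Ik k) (Ik k)ᶜ)
    (by rw [condEnt_compl, compl_Ik_zero, sub_self])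
    (fun _ => hiso.condEnt_Ik_compl_convex hX) hk

end Tuple

/-- Appendix A: for isentropic random variables, with
`g(k) = H(X_{[k]} | X_{[m]\[k]})` for `1 ≤ k ≤ m−1` and `g(m) = H(X_{[m]})`,
the function `k ↦ g(k)/k` is non-decreasing on `{1,…,m}`; equivalently,
`k·g(k+1) − (k+1)·g(k) ≥ 0` for all `1 ≤ k ≤ m−1`. -/
theorem stmt12 {m : ℕ} (hm : 2 ≤ m) {Ω : Type*} [MeasurableSpace Ω] (μ : Measure Ω)
    [IsProbabilityMeasure μ]
    {𝒳 : Fin m → Type*} [∀ i, Fintype (𝒳 i)] [∀ i, MeasurableSpace (𝒳 i)]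
    [∀ i, MeasurableSingletonClass (𝒳 i)]
    (X : ∀ i, Ω → 𝒳 i) (hX : ∀ i, Measurable (X i))
    (hiso : ∀ A B : Finset (Fin m), A.Nonempty → B.Nonempty → A.card = B.card →
        HX μ X A = HX μ X B)
    (g : ℕ → ℝ)
    (hg : ∀ k, 1 ≤ k → k ≤ m - 1 → g k = condEnt μ X (Ik k) (Ik k)ᶜ)
    (hgm : g m = HX μ X Finset.univ) :
    (∀ k l, 1 ≤ k → k ≤ l → l ≤ m → g k / (k : ℝ) ≤ g l / (l : ℝ)) ∧
    (∀ k, 1 ≤ k → k ≤ m - 1 → (k : ℝ) * g (k + 1) - ((k : ℝ) + 1) * g k ≥ 0) := by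
  have hg' : ∀ k, 1 ≤ k → k ≤ m → g k = condEnt μ X (Ik k) (Ik k)ᶜ := by
    intro k hk hkm
    rcases hkm.eq_or_lt with rfl | hlt
    · rw [hgm, condEnt_compl, compl_Ik_self, HX_empty, sub_zero]
    · exact hg k hk (by lia)
  have hstep : ∀ k, 1 ≤ k → k < m → ((k : ℝ) + 1) * g k ≤ k * g (k + 1) := by
    intro k hk hkm
    rw [hg' k hk hkm.le, hg' (k + 1) (by lia) hkm]
    exact IsIsentropic.succ_mul_condEnt_Ik_compl_le hiso hX hkm
  refine ⟨fun k l hk hkl hl => ?_, fun k hk hkm => sub_nonneg.2 (hstep k hk (by lia))⟩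
  exact monotoneOn_div_of_succ_mul_le_mul_succ hstep ⟨hk, hkl.trans hl⟩ ⟨hk.trans hkl, hl⟩ hkl
end

section
/- In the PIN model on a finite simple graph G = ([m], E): for every partition P of [m] with |P| ≥ 2, Δ(P) = |E(P)| / (|P|−1), where Δ(P) := (1/(|P|−1))·[Σ_{A∈P} H(X_A) − H(X_{[m]})] with entropies in bits, and |E(P)| is the number of edges of G whose two endpoints lie in different cells of P. -/
open MeasureTheory Finset

/-- Shannon entropy in bits (base-2 logarithm) of a random variable with values
in a finite set. -/
noncomputable def shannonEntropy2 {Ω : Type*} [MeasurableSpace Ω] (μ : Measure Ω)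
    {S : Type*} [Fintype S] (Y : Ω → S) : ℝ :=
  -∑ s : S, (μ (Y ⁻¹' {s})).toReal * Real.logb 2 (μ (Y ⁻¹' {s})).toReal

/-- `HX2 μ X A` is the Shannon entropy (in bits) of the tuple `X_A = (X_i : i ∈ A)`. -/
noncomputable def HX2 {m : ℕ} {Ω : Type*} [MeasurableSpace Ω] (μ : Measure Ω)
    {𝒳 : Fin m → Type*} [∀ i, Fintype (𝒳 i)] (X : ∀ i, Ω → 𝒳 i)
    (A : Finset (Fin m)) : ℝ :=
  shannonEntropy2 μ (fun ω => fun i : A => X i ω)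

/-- `Δ(P) = (1/(|P|−1))·[Σ_{A∈P} H(X_A) − H(X_{[m]})]`, entropies in bits. -/
noncomputable def ΔP2 {m : ℕ} {Ω : Type*} [MeasurableSpace Ω] (μ : Measure Ω)
    {𝒳 : Fin m → Type*} [∀ i, Fintype (𝒳 i)] (X : ∀ i, Ω → 𝒳 i)
    (P : Finset (Finset (Fin m))) : ℝ :=
  (1 / ((P.card : ℝ) - 1)) * (∑ A ∈ P, HX2 μ X A - HX2 μ X Finset.univ)

open Classical in
/-- `E(P)`: the edges of `G` whose two endpoints lie in different cells of `P`. -/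
noncomputable def crossEdges {m : ℕ} (G : SimpleGraph (Fin m)) [DecidableRel G.Adj]
    (P : Finset (Finset (Fin m))) : Finset (Sym2 (Fin m)) :=
  G.edgeFinset.filter fun e => ¬ ∃ A ∈ P, ∀ v ∈ e, v ∈ A

/-- The PIN-model random variable of terminal `i`: the tuple `(ξ_e : e ∈ E, i ∈ e)`. -/
def pinX {m : ℕ} {Ω : Type*} (G : SimpleGraph (Fin m)) [DecidableRel G.Adj]
    (ξ : Ω → G.edgeFinset → Bool) (i : Fin m) (ω : Ω) :
    {e : Sym2 (Fin m) // e ∈ G.edgeFinset ∧ i ∈ e} → Bool :=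
  fun e => ξ ω ⟨e.1, e.2.1⟩

/-!
`X_A` is, up to an injective recoding, the family of those `ξ_e` whose edge `e` has an endpoint in
`A`. These are independent fair bits, so `H(X_A)` is the number of such edges. Summing over the
cells of `P` counts an edge once for every cell containing one of its endpoints: twice if it
crosses `P`, and once otherwise. As `H(X_[m]) = |E|`, exactly `|E(P)|` remains.
-/

section Entropy

variable {Ω S : Type*} [MeasurableSpace Ω] {μ : Measure Ω} [Fintype S]

theorem shannonEntropy2_comp_of_injective {T : Type*} {_ : Fintype T} (Y : Ω → S) {g : S → T}
    (hg : Function.Injective g) : shannonEntropy2 μ (g ∘ Y) = shannonEntropy2 μ Y := by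
  have off_range (t : T) (ht : t ∉ Set.range g) : g ∘ Y ⁻¹' {t} = ∅ :=
    Set.preimage_singleton_eq_empty.2 fun h => ht (Set.range_comp_subset_range Y g h)
  have on_range (s : S) : g ∘ Y ⁻¹' {g s} = Y ⁻¹' {s} := by
    ext ω
    exact hg.eq_iff
  refine congrArg Neg.neg (Fintype.sum_of_injective g hg _ _ ?_ ?_).symm
  · intro t ht
    simp [off_range t ht]
  · intro s
    rw [on_range]

theorem shannonEntropy2_of_map_eq_uniformOfFintype [Nonempty S] [MeasurableSpace S]
    [MeasurableSingletonClass S] {Y : Ω → S} (hYmeas : Measurable Y)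
    (hY : μ.map Y = (PMF.uniformOfFintype S).toMeasure) :
    shannonEntropy2 μ Y = Real.logb 2 (Fintype.card S) := by
  have prob_eq (s : S) : (μ (Y ⁻¹' {s})).toReal = (Fintype.card S : ℝ)⁻¹ := by
    rw [← Measure.map_apply hYmeas (measurableSet_singleton s), hY,
      PMF.toMeasure_apply_singleton _ _ (measurableSet_singleton s), PMF.uniformOfFintype_apply,
      ENNReal.toReal_inv, ENNReal.toReal_natCast]
  simp [shannonEntropy2, prob_eq, Real.logb_inv]

end Entropy

section Uniform

theorem map_equiv_uniformOfFintype {α β : Type*} [Fintype α] [Nonempty α] [Fintype β] [Nonempty β]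
    (e : α ≃ β) : (PMF.uniformOfFintype α).map e = PMF.uniformOfFintype β := by
  classical
  ext b
  simp [PMF.map_apply, tsum_fintype, ← e.symm_apply_eq, Fintype.card_congr e]

theorem map_fst_uniformOfFintype (α β : Type*) [Fintype α] [Nonempty α] [Fintype β] [Nonempty β] :
    (PMF.uniformOfFintype (α × β)).map Prod.fst = PMF.uniformOfFintype α := by
  classical
  ext a
  simp [PMF.map_apply, tsum_fintype, Fintype.sum_prod_type_right, ENNReal.mul_inv, mul_left_comm,
    ENNReal.mul_inv_cancel]

variable {ι : Type*} [Fintype ι] [DecidableEq ι]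

theorem map_restrict_uniformOfFintype (α : ι → Type*) [∀ i, Fintype (α i)] [∀ i, Nonempty (α i)]
    (p : ι → Prop) [DecidablePred p] :
    (PMF.uniformOfFintype (∀ i, α i)).map (fun f (i : {i // p i}) => f i) =
      PMF.uniformOfFintype (∀ i : {i // p i}, α i) := by
  rw [← map_fst_uniformOfFintype (∀ i : {i // p i}, α i) (∀ i : {i // ¬ p i}, α i),
    ← map_equiv_uniformOfFintype (Equiv.piEquivPiSubtypeProd p α), PMF.map_comp]
  rfl

theorem shannonEntropy2_restrict_of_uniform {Ω κ : Type*} [MeasurableSpace Ω] {μ : Measure Ω}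
    [Fintype κ] [Nonempty κ] [MeasurableSpace κ] [MeasurableSingletonClass κ] {ξ : Ω → ι → κ}
    (hξmeas : Measurable ξ) (hξ : μ.map ξ = (PMF.uniformOfFintype (ι → κ)).toMeasure)
    (p : ι → Prop) [DecidablePred p] :
    shannonEntropy2 μ (fun ω (i : {i // p i}) => ξ ω i) =
      Fintype.card {i // p i} * Real.logb 2 (Fintype.card κ) := by
  let restrict (f : ι → κ) (i : {i // p i}) : κ := f i
  have hrestrict : Measurable restrict := by fun_prop
  have hmap : μ.map (restrict ∘ ξ) = (PMF.uniformOfFintype ({i // p i} → κ)).toMeasure := by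
    rw [← Measure.map_map hrestrict hξmeas, hξ, PMF.toMeasure_map _ _ hrestrict,
      map_restrict_uniformOfFintype]
  calc shannonEntropy2 μ (restrict ∘ ξ)
      = Real.logb 2 (Fintype.card ({i // p i} → κ)) :=
        shannonEntropy2_of_map_eq_uniformOfFintype (hrestrict.comp hξmeas) hmap
    _ = Fintype.card {i // p i} * Real.logb 2 (Fintype.card κ) := by
        rw [Fintype.card_fun, Nat.cast_pow, Real.logb_pow]

end Uniform

section FinsetCard

variable {α : Type*} [DecidableEq α] {s t : Finset α}

theorem card_subtype_mem_of_subset (hts : t ⊆ s) : Fintype.card {x : s // x.1 ∈ t} = #t :=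
  (Fintype.card_congr (Equiv.subtypeSubtypeEquivSubtype (hts ·))).trans (Fintype.card_coe t)

theorem card_eq_sum_ite_mem (hts : t ⊆ s) : #t = ∑ x ∈ s, if x ∈ t then 1 else 0 := by
  rw [sum_ite_mem, inter_eq_right.2 hts, card_eq_sum_ones]

end FinsetCard

section IncidentEdges

variable {V : Type*} [DecidableEq V] (G : SimpleGraph V) [Fintype G.edgeSet]

/-- The edges of `G` with at least one endpoint in `A`, that is, the edges `e` for which `ξ_e` is
part of the tuple `X_A` of the PIN model. -/
def incidentEdges (A : Finset V) : Finset (Sym2 V) :=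
  {e ∈ G.edgeFinset | ∃ v ∈ A, v ∈ e}

variable {G} in
theorem mem_incidentEdges {A : Finset V} {e : Sym2 V} :
    e ∈ incidentEdges G A ↔ e ∈ G.edgeFinset ∧ ∃ v ∈ A, v ∈ e :=
  mem_filter

theorem incidentEdges_subset (A : Finset V) : incidentEdges G A ⊆ G.edgeFinset :=
  filter_subset _ _

theorem incidentEdges_univ [Fintype V] : incidentEdges G univ = G.edgeFinset :=
  filter_true_of_mem fun e _ => ⟨e.out.1, mem_univ _, e.out_fst_mem⟩

end IncidentEdges

section PIN

variable {m : ℕ}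

theorem HX2_pinX {Ω : Type*} [MeasurableSpace Ω] {μ : Measure Ω} (G : SimpleGraph (Fin m))
    [DecidableRel G.Adj] {ξ : Ω → G.edgeFinset → Bool} (hξmeas : Measurable ξ)
    (hξ : μ.map ξ = (PMF.uniformOfFintype (G.edgeFinset → Bool)).toMeasure)
    (A : Finset (Fin m)) : HX2 μ (pinX G ξ) A = #(incidentEdges G A) := by
  let copyBits (f : {e : G.edgeFinset // e.1 ∈ incidentEdges G A} → Bool) (i : A)
      (e : {e : Sym2 (Fin m) // e ∈ G.edgeFinset ∧ i.1 ∈ e}) : Bool :=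
    f ⟨⟨e, e.2.1⟩, mem_incidentEdges.2 ⟨e.2.1, i, i.2, e.2.2⟩⟩
  have copyBits_injective : Function.Injective copyBits := by
    intro f f' hff'
    ext ⟨⟨e, he⟩, heA⟩
    obtain ⟨-, v, hvA, hve⟩ := mem_incidentEdges.1 heA
    exact congrFun (congrFun hff' ⟨v, hvA⟩) ⟨e, he, hve⟩
  calc HX2 μ (pinX G ξ) A
      = shannonEntropy2 μ (copyBits ∘ fun ω e => ξ ω e) := rfl
    _ = shannonEntropy2 μ (fun ω (e : {e : G.edgeFinset // e.1 ∈ incidentEdges G A}) => ξ ω e) :=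
        shannonEntropy2_comp_of_injective _ copyBits_injective
    _ = #(incidentEdges G A) := by
        rw [shannonEntropy2_restrict_of_uniform hξmeas hξ (fun e => e.1 ∈ incidentEdges G A),
          card_subtype_mem_of_subset (incidentEdges_subset G A), Fintype.card_bool, Nat.cast_ofNat,
          Real.logb_self_eq_one one_lt_two, mul_one]

theorem crossEdges_subset (G : SimpleGraph (Fin m)) [DecidableRel G.Adj]
    (P : Finset (Finset (Fin m))) : crossEdges G P ⊆ G.edgeFinset :=
  filter_subset _ _

namespace IsPartition

variable {G : SimpleGraph (Fin m)} [DecidableRel G.Adj] {P : Finset (Finset (Fin m))}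

theorem card_filter_mem_incidentEdges (hP : IsPartition P) {e : Sym2 (Fin m)}
    (he : e ∈ G.edgeFinset) :
    #{A ∈ P | e ∈ incidentEdges G A} = 1 + if e ∈ crossEdges G P then 1 else 0 := by
  induction e with | _ a b
  obtain ⟨A, ⟨hAP, haA⟩, A_unique⟩ := hP.2 a
  obtain ⟨B, ⟨hBP, hbB⟩, B_unique⟩ := hP.2 b
  have cells_eq : {C ∈ P | s(a, b) ∈ incidentEdges G C} = ({A, B} : Finset _) := by
    ext C
    have hCA : C ∈ P ∧ a ∈ C ↔ C = A := ⟨A_unique C, by rintro rfl; exact ⟨hAP, haA⟩⟩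
    have hCB : C ∈ P ∧ b ∈ C ↔ C = B := ⟨B_unique C, by rintro rfl; exact ⟨hBP, hbB⟩⟩
    simp only [mem_filter, mem_incidentEdges, and_iff_right he, Sym2.mem_iff, and_or_left,
      exists_or, exists_eq_right, hCA, hCB, mem_insert, mem_singleton]
  have cross_iff : s(a, b) ∈ crossEdges G P ↔ A ≠ B := by
    rw [crossEdges, mem_filter, and_iff_right he, not_iff_not]
    simp only [Sym2.ball]
    constructor
    · rintro ⟨C, hCP, haC, hbC⟩
      exact (A_unique C ⟨hCP, haC⟩).symm.trans (B_unique C ⟨hCP, hbC⟩)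
    · rintro rfl
      exact ⟨A, hAP, haA, hbB⟩
  rw [cells_eq]
  by_cases hAB : A = B <;> simp [cross_iff, hAB]

theorem sum_card_incidentEdges (hP : IsPartition P) :
    ∑ A ∈ P, #(incidentEdges G A) = #G.edgeFinset + #(crossEdges G P) := by
  calc ∑ A ∈ P, #(incidentEdges G A)
      = ∑ A ∈ P, ∑ e ∈ G.edgeFinset, if e ∈ incidentEdges G A then 1 else 0 :=
        sum_congr rfl fun A _ => card_eq_sum_ite_mem (incidentEdges_subset G A)
    _ = ∑ e ∈ G.edgeFinset, #{A ∈ P | e ∈ incidentEdges G A} := by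
        simp only [card_filter]
        exact sum_comm
    _ = ∑ e ∈ G.edgeFinset, (1 + if e ∈ crossEdges G P then 1 else 0) :=
        sum_congr rfl fun e he => hP.card_filter_mem_incidentEdges he
    _ = #G.edgeFinset + #(crossEdges G P) := by
        rw [sum_add_distrib, ← card_eq_sum_ones, ← card_eq_sum_ite_mem (crossEdges_subset G P)]

end IsPartition

end PIN

/-- In the PIN model on a finite simple graph `G = ([m], E)`:
`Δ(P) = |E(P)|/(|P|−1)` for every partition `P` of `[m]` with `|P| ≥ 2`. -/
theorem stmt14 {m : ℕ} {Ω : Type*} [MeasurableSpace Ω] (μ : Measure Ω)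
    [IsProbabilityMeasure μ]
    (G : SimpleGraph (Fin m)) [DecidableRel G.Adj]
    (ξ : Ω → G.edgeFinset → Bool) (hξmeas : Measurable ξ)
    (hξ : Measure.map ξ μ = (PMF.uniformOfFintype (G.edgeFinset → Bool)).toMeasure)
    (P : Finset (Finset (Fin m))) (hP : IsPartition P) (hcard : 2 ≤ P.card) :
    ΔP2 μ (pinX G ξ) P = ((crossEdges G P).card : ℝ) / ((P.card : ℝ) - 1) := by
  have sum_cells : ∑ A ∈ P, HX2 μ (pinX G ξ) A = #G.edgeFinset + #(crossEdges G P) := by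
    simp only [HX2_pinX G hξmeas hξ]
    exact_mod_cast hP.sum_card_incidentEdges
  have total : HX2 μ (pinX G ξ) univ = #G.edgeFinset := by
    rw [HX2_pinX G hξmeas hξ, incidentEdges_univ]
  rw [ΔP2, sum_cells, total, add_sub_cancel_left, one_div_mul_eq_div]
end

section
/- Let m ≥ 3 and consider the complete graph K_m on vertex set [m]. For every partition P of [m] with |P| ≥ 2, one has |E(P)|/(|P|−1) ≥ m/2, with equality if and only if P is the singleton partition S. (Combinatorial form of Corollary 2/Corollary 3: since Δ(P) = |E(P)|/(|P|−1) in the complete-graph PIN model, S is the unique minimizer of Δ there.) -/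
open Finset

open Classical in
/-- `|E(P)|`: the number of edges of the complete graph `K_m` whose two endpoints
lie in different cells of `P`. -/
noncomputable def crossCount {m : ℕ} (P : Finset (Finset (Fin m))) : ℕ :=
  ((⊤ : SimpleGraph (Fin m)).edgeFinset.filter fun e => ¬ ∃ A ∈ P, ∀ v ∈ e, v ∈ A).card

/-!
In the complete multipartite graph whose classes are the `k` cells of `P`, a vertex lying in the
cell `A` has degree `m - |A|`. This is at least `k - 1`, because each of the other `k - 1` cells is
nonempty, so summing degrees gives `2 |E(P)| ≥ m (k - 1)`. In the case of equality every cell has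
`m - k + 1` elements; adding up the sizes of the cells, `k (m - k + 1) = m`, that is
`(k - 1) (m - k) = 0`. Hence `k = m` as soon as `k ≥ 2`.
-/

section Finpartition

variable {α : Type*} [DecidableEq α] {s A : Finset α} (P : Finpartition s)

lemma card_parts_eq_card_iff_eq_bot : #P.parts = #s ↔ P = ⊥ := by
  refine ⟨fun h ↦ ?_, fun h ↦ h ▸ Finpartition.card_bot s⟩
  have one_le_card : ∀ A ∈ P.parts, 1 ≤ #A := fun A hA ↦ (P.nonempty_of_mem_parts hA).card_pos
  have card_eq_one : ∀ A ∈ P.parts, 1 = #A := by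
    rwa [← sum_eq_sum_iff_of_le one_le_card, P.sum_card_parts, ← card_eq_sum_ones]
  refine le_bot_iff.1 fun A hA ↦ ⟨A, ?_, le_rfl⟩
  obtain ⟨a, rfl⟩ := Finset.card_eq_one.1 (card_eq_one A hA).symm
  exact Finpartition.mem_bot_iff.2 ⟨a, P.le hA (mem_singleton_self a), rfl⟩

variable {P} in
lemma card_parts_add_card_le_of_mem_parts (hA : A ∈ P.parts) : #P.parts + #A ≤ #s + 1 := by
  have card_erase_le : #(P.parts.erase A) ≤ ∑ B ∈ P.parts.erase A, #B := by
    rw [card_eq_sum_ones]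
    exact sum_le_sum fun B hB ↦ (P.nonempty_of_mem_parts (mem_of_mem_erase hB)).card_pos
  have sum_erase_add : ∑ B ∈ P.parts.erase A, #B + #A = #s := by
    rw [sum_erase_add _ _ hA, P.sum_card_parts]
  have := card_erase_add_one hA
  omega

variable {P} in
lemma forall_card_parts_add_card_eq_iff_eq_bot (hP : 2 ≤ #P.parts) :
    (∀ A ∈ P.parts, #P.parts + #A = #s + 1) ↔ P = ⊥ := by
  constructor
  · intro h
    have sum_eq : #P.parts * #P.parts + #s = #P.parts * (#s + 1) := by
      simpa [sum_add_distrib, P.sum_card_parts] using sum_congr rfl h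
    have prod_eq_zero : (#P.parts - 1 : ℤ) * (#s - #P.parts) = 0 := by
      zify at sum_eq
      linear_combination -sum_eq
    rw [← card_parts_eq_card_iff_eq_bot]
    rcases mul_eq_zero.1 prod_eq_zero with h | h <;> omega
  · rintro rfl A hA
    obtain ⟨a, -, rfl⟩ := Finpartition.mem_bot_iff.1 hA
    rw [Finpartition.card_bot, card_singleton]

end Finpartition

lemma sum_degree_add_one {V : Type*} [Fintype V] (G : SimpleGraph V) [DecidableRel G.Adj] :
    ∑ v, (G.degree v + 1) = 2 * #G.edgeFinset + Fintype.card V := by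
  simp [sum_add_distrib, G.sum_degrees_eq_twice_card_edges]

section CrossGraph

variable {α : Type*} [Fintype α] [DecidableEq α]

/-- The complete multipartite graph whose classes are the cells of `P`: its edges are the pairs of
vertices lying in different cells, so its edge set is `E(P)`. -/
abbrev crossGraph (P : Finpartition (univ : Finset α)) : SimpleGraph α :=
  (⊤ : SimpleGraph (Finset α)).comap P.part

variable (P : Finpartition (univ : Finset α))

lemma degree_crossGraph_add_card_part (a : α) :
    (crossGraph P).degree a + #(P.part a) = Fintype.card α := by
  have neighborFinset_eq : (crossGraph P).neighborFinset a = (P.part a)ᶜ := by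
    ext b
    simp [P.mem_part_iff_part_eq_part, eq_comm]
  rw [← SimpleGraph.card_neighborFinset_eq_degree, neighborFinset_eq, card_compl_add_card]

lemma card_parts_le_degree_crossGraph_add_one (a : α) :
    #P.parts ≤ (crossGraph P).degree a + 1 := by
  have parts_add_part_le := card_parts_add_card_le_of_mem_parts (P.part_mem.2 (mem_univ a))
  rw [card_univ, ← degree_crossGraph_add_card_part P a] at parts_add_part_le
  omega

variable {P} in
lemma forall_card_parts_eq_degree_crossGraph_add_one_iff_eq_bot (hP : 2 ≤ #P.parts) :
    (∀ a, #P.parts = (crossGraph P).degree a + 1) ↔ P = ⊥ := by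
  have eq_degree_add_one_iff (a : α) :
      #P.parts = (crossGraph P).degree a + 1 ↔ #P.parts + #(P.part a) = Fintype.card α + 1 := by
    have := degree_crossGraph_add_card_part P a
    omega
  simp only [eq_degree_add_one_iff, ← forall_card_parts_add_card_eq_iff_eq_bot hP, card_univ]
  refine ⟨fun h A hA ↦ ?_, fun h a ↦ h _ (P.part_mem.2 (mem_univ a))⟩
  obtain ⟨a, -, rfl⟩ := P.part_surjOn hA
  exact h a

lemma card_mul_card_parts_le :
    Fintype.card α * #P.parts ≤ 2 * #(crossGraph P).edgeFinset + Fintype.card α := by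
  rw [← sum_degree_add_one, ← smul_eq_mul, ← card_univ, ← sum_const]
  exact sum_le_sum fun a _ ↦ card_parts_le_degree_crossGraph_add_one P a

variable {P} in
lemma card_mul_card_parts_eq_iff_eq_bot (hP : 2 ≤ #P.parts) :
    Fintype.card α * #P.parts = 2 * #(crossGraph P).edgeFinset + Fintype.card α ↔ P = ⊥ := by
  rw [← forall_card_parts_eq_degree_crossGraph_add_one_iff_eq_bot hP, ← sum_degree_add_one,
    ← smul_eq_mul, ← card_univ, ← sum_const,
    sum_eq_sum_iff_of_le fun a _ ↦ card_parts_le_degree_crossGraph_add_one P a]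
  simp only [mem_univ, forall_const]

end CrossGraph

section PartitionOfFin

variable {m : ℕ}

lemma IsPartition.exists_finpartition_parts_eq {P : Finset (Finset (Fin m))} (hP : IsPartition P) :
    ∃ Q : Finpartition (univ : Finset (Fin m)), Q.parts = P :=
  ⟨.ofExistsUnique P (fun A _ ↦ subset_univ A) (fun i _ ↦ hP.2 i)
    fun h ↦ not_nonempty_empty (hP.1 ∅ h), rfl⟩

lemma parts_eq_sPart_iff_eq_bot (Q : Finpartition (univ : Finset (Fin m))) :
    Q.parts = sPart m ↔ Q = ⊥ := by
  rw [Finpartition.ext_iff, Finpartition.parts_bot, map_eq_image]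
  rfl

lemma crossCount_parts (Q : Finpartition (univ : Finset (Fin m))) :
    crossCount Q.parts = #(crossGraph Q).edgeFinset := by
  unfold crossCount
  congr 1
  ext e
  induction e with
  | h i j =>
    have same_cell_iff : (∃ A ∈ Q.parts, i ∈ A ∧ j ∈ A) ↔ Q.part i = Q.part j := by
      rw [← Q.mem_part_iff_exists, Q.mem_part_iff_part_eq_part (mem_univ i) (mem_univ j)]
    simp only [mem_filter, SimpleGraph.mem_edgeFinset, SimpleGraph.mem_edgeSet, Sym2.ball,
      SimpleGraph.comap_adj, SimpleGraph.top_adj, same_cell_iff]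
    exact and_iff_right_of_imp fun h hij ↦ h (congrArg Q.part hij)

end PartitionOfFin

/-- Combinatorial form of Corollaries 2/3: for the complete graph `K_m`, `m ≥ 3`,
every partition `P` of `[m]` with `|P| ≥ 2` satisfies `|E(P)|/(|P|−1) ≥ m/2`, with
equality iff `P` is the singleton partition. -/
theorem stmt17 {m : ℕ} (hm : 3 ≤ m) (P : Finset (Finset (Fin m)))
    (hP : IsPartition P) (hcard : 2 ≤ P.card) :
    (crossCount P : ℝ) / ((P.card : ℝ) - 1) ≥ (m : ℝ) / 2 ∧
    ((crossCount P : ℝ) / ((P.card : ℝ) - 1) = (m : ℝ) / 2 ↔ P = sPart m) := by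
  obtain ⟨Q, rfl⟩ := hP.exists_finpartition_parts_eq
  have edges_ge : (m : ℝ) * #Q.parts ≤ 2 * #(crossGraph Q).edgeFinset + m := by
    simpa using Nat.cast_le (α := ℝ).2 (card_mul_card_parts_le Q)
  have edges_eq_iff : (m : ℝ) * #Q.parts = 2 * #(crossGraph Q).edgeFinset + m ↔ Q = ⊥ := by
    rw [← card_mul_card_parts_eq_iff_eq_bot hcard, Fintype.card_fin]
    norm_cast
  have cells_sub_one_pos : (0 : ℝ) < #Q.parts - 1 := by
    rw [sub_pos]
    exact_mod_cast hcard
  rw [crossCount_parts, parts_eq_sPart_iff_eq_bot, ← edges_eq_iff]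
  constructor
  · rw [ge_iff_le, div_le_div_iff₀ two_pos cells_sub_one_pos]
    linarith
  · rw [div_eq_div_iff cells_sub_one_pos.ne' two_ne_zero]
    constructor <;> intro h <;> linarith
end
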